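/- Assume f satisfies (A1)–(A3), fix χ > 0 and ε > 0 small. For x̂ ∈ NUE*_χ and n ∈ ℤ define q_ε(f̂^n(x̂)) := δ_ε · inf{e^{ε|m|} Q_ε(f̂^{m+n}(x̂)) : m ≤ 0}. Then: (1) for every n ∈ ℤ the infimum is attained (it is a minimum) and 0 < q_ε(x̂) < ε Q_ε(x̂); (2) (greedy algorithm) q_ε(f̂^n(x̂)) = min{e^ε q_ε(f̂^{n−1}(x̂)), δ_ε Q_ε(f̂^n(x̂))} for every n ∈ ℤ. -/

import Mathlib

open Real MeasureTheory Filter Topology Metric Set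

noncomputable section

namespace OneDim

/-- The interval `M = [0, 1/2]`. -/
def Mset : Set ℝ := Set.Icc 0 (1/2)

/-- Data of a piecewise `C^{1+β}` interval map `f : M → M` with discontinuity set `D`,
constants `β ∈ (0,1)`, `a, K > 1`, radius function `r` and inverse branches `g`. -/
structure GoodMap where
  f : ℝ → ℝ
  D : Set ℝ
  β : ℝ
  a : ℝ
  K : ℝ
  r : ℝ → ℝ
  g : ℝ → ℝ → ℝ
  hβ0 : 0 < β
  hβ1 : β < 1
  ha : 1 < a
  hK : 1 < K
  hmaps : ∀ x ∈ Mset, f x ∈ Mset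
  hD : D ⊆ Mset
  hdiff : DifferentiableOn ℝ f (Mset \ D)

namespace GoodMap

/-- The critical set `C = {x ∈ M \ D : df_x = 0}`. -/
def crit (F : GoodMap) : Set ℝ := {x | x ∈ Mset \ F.D ∧ deriv F.f x = 0}

/-- The singular set `S = C ∪ D`. -/
def S (F : GoodMap) : Set ℝ := F.crit ∪ F.D

/-- Distance to the singular set. -/
def dS (F : GoodMap) (x : ℝ) : ℝ := Metric.infDist x F.S

/-- Conditions (A1)–(A3). -/
def SatA (F : GoodMap) : Prop :=
  ∀ x ∈ Mset, x ∉ F.S → F.f x ∉ F.S →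
    (min (F.dS x ^ F.a) (F.dS (F.f x) ^ F.a) < F.r x ∧ F.r x < 1) ∧
    -- (A1)
    (Set.InjOn F.f (Metric.ball x (2 * F.r x)) ∧
      (∀ y ∈ Metric.ball x (2 * F.r x), DifferentiableAt ℝ F.f y) ∧
      F.g x (F.f x) = x ∧
      (∀ z ∈ Metric.ball (F.f x) (2 * F.r x), F.f (F.g x z) = z) ∧
      Set.InjOn (F.g x) (Metric.ball (F.f x) (2 * F.r x)) ∧
      (∀ z ∈ Metric.ball (F.f x) (2 * F.r x), DifferentiableAt ℝ (F.g x) z)) ∧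
    -- (A2)
    ((∀ y ∈ Metric.ball x (2 * F.r x),
        F.dS x ^ F.a ≤ |deriv F.f y| ∧ |deriv F.f y| ≤ F.dS x ^ (-F.a)) ∧
      (∀ z ∈ Metric.ball (F.f x) (2 * F.r x),
        F.dS x ^ F.a ≤ |deriv (F.g x) z| ∧ |deriv (F.g x) z| ≤ F.dS x ^ (-F.a))) ∧
    -- (A3)
    ((∀ y ∈ Metric.ball x (2 * F.r x), ∀ z ∈ Metric.ball x (2 * F.r x),
        |deriv F.f y - deriv F.f z| ≤ F.K * |y - z| ^ F.β) ∧
      (∀ y ∈ Metric.ball (F.f x) (2 * F.r x), ∀ z ∈ Metric.ball (F.f x) (2 * F.r x),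
        |deriv (F.g x) y - deriv (F.g x) z| ≤ F.K * |y - z| ^ F.β))

end GoodMap

/-- Membership in the natural extension space `M̂`. -/
def inMhat (f : ℝ → ℝ) (x : ℤ → ℝ) : Prop :=
  (∀ n, x n ∈ Mset) ∧ ∀ n : ℤ, f (x (n - 1)) = x n

/-- The natural extension map `f̂` (left shift). -/
def fhat (x : ℤ → ℝ) : ℤ → ℝ := fun n => x (n + 1)

/-- Iterate `f̂^k` of the natural extension map, `k ∈ ℤ`. -/
def fhatI (k : ℤ) (x : ℤ → ℝ) : ℤ → ℝ := fun n => x (n + k)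

/-- The metric `d̂(x̂,ŷ) = sup{2^n d(x_n,y_n) : n ≤ 0}` on `M̂`. -/
def dhat (x y : ℤ → ℝ) : ℝ :=
  sSup {t : ℝ | ∃ n : ℤ, n ≤ 0 ∧ t = (2:ℝ) ^ n * |x n - y n|}

/-- The invertible derivative cocycle `d̂f^{(n)}` over `f̂`. -/
def dfhat (f : ℝ → ℝ) (x : ℤ → ℝ) (n : ℤ) : ℝ :=
  if 0 ≤ n then ∏ j ∈ Finset.range n.toNat, deriv f (x (j : ℤ))
  else (∏ j ∈ Finset.range (-n).toNat, deriv f (x (-(j : ℤ) - 1)))⁻¹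

/-- The Pesin parameter `u(x̂)`. -/
def uPes (f : ℝ → ℝ) (χ : ℝ) (x : ℤ → ℝ) : ℝ :=
  Real.sqrt (∑' n : ℕ, Real.exp (2 * (n:ℝ) * χ) * (dfhat f x (-(n:ℤ))) ^ 2)

/-- The Pesin chart `Ψ_{x̂}(t) = t/u(x̂) + x₀`. -/
def Psi (f : ℝ → ℝ) (χ : ℝ) (x : ℤ → ℝ) (t : ℝ) : ℝ := t / uPes f χ x + x 0

/-- The set `NUE_χ`. -/
def NUE (F : GoodMap) (χ : ℝ) : Set (ℤ → ℝ) :=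
  {x | inMhat F.f x ∧ (∀ n, x n ∉ F.S) ∧
    (∃ l > χ, Tendsto (fun n : ℕ => Real.log |dfhat F.f x (n:ℤ)| / (n:ℝ)) atTop (𝓝 l)) ∧
    (∃ l > χ, Tendsto (fun n : ℕ => Real.log |dfhat F.f x (-(n:ℤ))| / (-(n:ℝ))) atTop (𝓝 l))}

/-- `ρ(x̂) = d({x₋₁,x₀,x₁}, S)`. -/
def rho (F : GoodMap) (x : ℤ → ℝ) : ℝ :=
  min (F.dS (x (-1))) (min (F.dS (x 0)) (F.dS (x 1)))

/-- `I_ε = {e^{-εn/3} : n ≥ 0}`. -/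
def Ieps (ε : ℝ) : Set ℝ := {q | ∃ n : ℕ, q = Real.exp (-(ε * n) / 3)}

/-- `Q̃_ε(x̂)`. -/
def Qtilde (F : GoodMap) (χ ε : ℝ) (x : ℤ → ℝ) : ℝ :=
  ε ^ (3 / F.β) *
    min (uPes F.f χ x ^ (-(24 / F.β)))
      (uPes F.f χ (fhatI (-1) x) ^ (-(12 / F.β)) * rho F x ^ (72 * F.a / F.β))

/-- `Q_ε(x̂) = max{q ∈ I_ε : q ≤ Q̃_ε(x̂)}`. -/
def Qeps (F : GoodMap) (χ ε : ℝ) (x : ℤ → ℝ) : ℝ :=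
  sSup {q | q ∈ Ieps ε ∧ q ≤ Qtilde F χ ε x}

/-- The regular set. -/
def Reg (F : GoodMap) : Set (ℤ → ℝ) :=
  {x | inMhat F.f x ∧ (∀ n, x n ∉ F.S) ∧
    Tendsto (fun n : ℕ => Real.log (F.dS (x (n:ℤ))) / (n:ℝ)) atTop (𝓝 0) ∧
    Tendsto (fun n : ℕ => Real.log (F.dS (x (-(n:ℤ)))) / (n:ℝ)) atTop (𝓝 0)}

/-- The set `NUE*_χ`. -/
def NUEstar (F : GoodMap) (χ : ℝ) : Set (ℤ → ℝ) :=
  {x | x ∈ NUE F χ ∧ x ∈ Reg F ∧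
    (∃ nk : ℕ → ℤ, Tendsto nk atTop atBot ∧
      Tendsto (fun k => uPes F.f χ (fhatI (nk k) x)) atTop (𝓝 (uPes F.f χ x))) ∧
    Tendsto (fun n : ℕ => Real.log (uPes F.f χ (fhatI (-(n:ℤ)) x)) / (-(n:ℝ))) atTop (𝓝 0)}

/-- An ε-chart is a pair `(x̂, p)`, representing `Ψ_{x̂}` restricted to `[-p,p]`. -/
structure Chart where
  x : ℤ → ℝ
  p : ℝ

/-- `(x̂, p)` is a genuine ε-chart. -/
def IsChart (F : GoodMap) (χ ε : ℝ) (c : Chart) : Prop :=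
  c.x ∈ NUE F χ ∧ 0 < c.p ∧ c.p ≤ Qeps F χ ε c.x

/-- ε-overlap of two ε-charts. -/
def Overlap (F : GoodMap) (χ ε : ℝ) (c₁ c₂ : Chart) : Prop :=
  Real.exp (-ε) ≤ c₁.p / c₂.p ∧ c₁.p / c₂.p ≤ Real.exp ε ∧
  |c₁.x 0 - c₂.x 0| + |(uPes F.f χ c₁.x)⁻¹ - (uPes F.f χ c₂.x)⁻¹| < (c₁.p * c₂.p) ^ 4

/-- `g_{x̂} = g_{x₋₁}`, the inverse branch of `f` taking `x₀` to `x₋₁`. -/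
def ghat (F : GoodMap) (x : ℤ → ℝ) : ℝ → ℝ := F.g (x (-1))

/-- `G_{x̂} = Ψ_{f̂⁻¹x̂}⁻¹ ∘ g_{x̂} ∘ Ψ_{x̂}`. -/
def Gmap (F : GoodMap) (χ : ℝ) (x : ℤ → ℝ) (t : ℝ) : ℝ :=
  uPes F.f χ (fhatI (-1) x) * (ghat F x (Psi F.f χ x t) - x (-1))

/-- `G_{x̂,ŷ} = Ψ_{ŷ}⁻¹ ∘ g_{x̂} ∘ Ψ_{x̂}`. -/
def Gmap2 (F : GoodMap) (χ : ℝ) (x y : ℤ → ℝ) (t : ℝ) : ℝ :=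
  uPes F.f χ y * (ghat F x (Psi F.f χ x t) - y 0)

/-- `F_{x̂} = Ψ_{f̂x̂}⁻¹ ∘ f ∘ Ψ_{x̂}`. -/
def Fmap (F : GoodMap) (χ : ℝ) (x : ℤ → ℝ) (t : ℝ) : ℝ :=
  uPes F.f χ (fhat x) * (F.f (Psi F.f χ x t) - x 1)

/-- `δ_ε = e^{-εn}` where `n` is the unique positive integer with `e^{-εn} < ε ≤ e^{-ε(n-1)}`. -/
def deltaEps (ε : ℝ) : ℝ :=
  Real.exp (-(ε * ((⌊Real.log (1 / ε) / ε⌋ + 1 : ℤ) : ℝ)))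

/-- Weak edge `v ⤎ w` (from `w = Ψ_{x̂}^p` to `v = Ψ_{ŷ}^q`). -/
def WeakEdge (F : GoodMap) (χ ε : ℝ) (v w : Chart) : Prop :=
  IsChart F χ ε v ∧ IsChart F χ ε w ∧
  Overlap F χ ε ⟨fhatI (-1) w.x, v.p⟩ v ∧
  w.p ≤ Real.exp ε * v.p

/-- Edge `v ← w` (from `w = Ψ_{x̂}^p` to `v = Ψ_{ŷ}^q`). -/
def Edge (F : GoodMap) (χ ε : ℝ) (v w : Chart) : Prop :=
  IsChart F χ ε v ∧ IsChart F χ ε w ∧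
  Overlap F χ ε ⟨fhatI (-1) w.x, v.p⟩ v ∧
  |v.x 1 - w.x 0| < v.p ∧
  Real.exp (-v.p) ≤ uPes F.f χ (fhat v.x) / uPes F.f χ w.x ∧
  uPes F.f χ (fhat v.x) / uPes F.f χ w.x ≤ Real.exp v.p ∧
  w.p = min (Real.exp ε * v.p) (deltaEps ε * Qeps F χ ε w.x)

/-- ε-generalized pseudo-orbit. -/
def IsGPO (F : GoodMap) (χ ε : ℝ) (v : ℤ → Chart) : Prop :=
  ∀ n : ℤ, Edge F χ ε (v n) (v (n + 1))

/-- weak ε-generalized pseudo-orbit. -/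
def IsWeakGPO (F : GoodMap) (χ ε : ℝ) (v : ℤ → Chart) : Prop :=
  ∀ n : ℤ, WeakEdge F χ ε (v n) (v (n + 1))

/-- The range `Ψ_{x̂}([-p,p])` of an ε-chart. -/
def chartRange (F : GoodMap) (χ : ℝ) (c : Chart) : Set ℝ :=
  Psi F.f χ c.x '' Set.Icc (-c.p) c.p

/-- A bi-infinite sequence of ε-charts shadows `x̂ ∈ M̂`. -/
def Shadows (F : GoodMap) (χ : ℝ) (v : ℤ → Chart) (x : ℤ → ℝ) : Prop :=
  inMhat F.f x ∧ ∀ n : ℤ, x n ∈ chartRange F χ (v n)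

/-- `q_ε(x̂) = δ_ε inf{e^{ε|m|} Q_ε(f̂^m x̂) : m ≤ 0}`. -/
def qeps (F : GoodMap) (χ ε : ℝ) (x : ℤ → ℝ) : ℝ :=
  deltaEps ε *
    sInf {t : ℝ | ∃ m : ℤ, m ≤ 0 ∧ t = Real.exp (ε * |(m:ℝ)|) * Qeps F χ ε (fhatI m x)}

/-- Recurrence: some symbol repeats infinitely often in the future and some in the past. -/
def Recurrent {V : Type*} (v : ℤ → V) : Prop :=
  (∃ c, {n : ℤ | 0 < n ∧ v n = c}.Infinite) ∧ ∃ c, {n : ℤ | n < 0 ∧ v n = c}.Infinite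

/-- The distance `d(v,w) = exp(-min{|n| : v_n ≠ w_n})` on sequence spaces. -/
def dSigma {V : Type*} (v w : ℤ → V) : ℝ :=
  sSup {t : ℝ | ∃ n : ℤ, v n ≠ w n ∧ t = Real.exp (-|(n:ℝ)|)}

/-- Sup norm over a set. -/
def supNorm (h : ℝ → ℝ) (I : Set ℝ) : ℝ := sSup ((fun t => |h t|) '' I)

/-- Hölder constant over a set. -/
def holConst (γ : ℝ) (h : ℝ → ℝ) (I : Set ℝ) : ℝ :=
  sSup {r : ℝ | ∃ t ∈ I, ∃ s ∈ I, t ≠ s ∧ r = |h t - h s| / |t - s| ^ γ}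

/-!
The parameters `u` and `d(·, S)` vary subexponentially along the backward orbit of a point of
`NUE*_χ`, hence so does the minimum of `1` and `Q̃_ε`. As `I_ε` is a geometric progression of
ratio `e^{-ε/3}`, `Q_ε` is at least `e^{-ε/3}` times that minimum. The weights `e^{ε|m|}` thus beat
any decay of `Q_ε` at `-∞`, so the infimum defining `q_ε` is attained, and therefore positive. For
the greedy algorithm, split off the term `m = 0` and shift the remaining ones by one step.
-/

open Asymptotics

theorem isLittleO_const_intCast_atBot (c : ℝ) :
    (fun _ ↦ c) =o[atBot] fun n : ℤ ↦ (n : ℝ) :=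
  (isLittleO_const_id_cobounded c).comp_tendsto tendsto_intCast_atBot_cobounded

/-- A positive sequence `v` which is *tempered at `-∞`*: `v n = e^{o(n)}` as `n → -∞`. The condition
is stated with `=o` rather than as `log (v n) / n → 0` so that the asymptotic calculus applies. -/
structure IsBackwardTempered (v : ℤ → ℝ) : Prop where
  pos : ∀ n, 0 < v n
  log_isLittleO : (fun n ↦ log (v n)) =o[atBot] fun n : ℤ ↦ (n : ℝ)

namespace IsBackwardTempered

variable {v w : ℤ → ℝ}

theorem of_tendsto (hpos : ∀ n, 0 < v n)
    (hlim : Tendsto (fun n : ℕ ↦ log (v (-(n : ℤ))) / (-(n : ℝ))) atTop (𝓝 0)) :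
    IsBackwardTempered v := by
  refine ⟨hpos, (isLittleO_iff_tendsto' ?_).2 ?_⟩
  · filter_upwards [eventually_lt_atBot (0 : ℤ)] with n hn h0
    exact absurd (Int.cast_eq_zero.1 h0) hn.ne
  · rw [← tendsto_comp_neg_atTop_iff, ← Nat.map_cast_int_atTop, tendsto_map'_iff]
    simpa only [Function.comp_def, Int.cast_neg, Int.cast_natCast] using hlim

theorem const {c : ℝ} (hc : 0 < c) : IsBackwardTempered fun _ ↦ c :=
  ⟨fun _ ↦ hc, isLittleO_const_intCast_atBot _⟩

protected theorem mul (hv : IsBackwardTempered v) (hw : IsBackwardTempered w) :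
    IsBackwardTempered fun n ↦ v n * w n where
  pos n := mul_pos (hv.pos n) (hw.pos n)
  log_isLittleO := by
    simpa only [log_mul (hv.pos _).ne' (hw.pos _).ne'] using hv.log_isLittleO.add hw.log_isLittleO

protected theorem rpow (hv : IsBackwardTempered v) (s : ℝ) :
    IsBackwardTempered fun n ↦ v n ^ s where
  pos n := rpow_pos_of_pos (hv.pos n) s
  log_isLittleO := by
    simpa only [log_rpow (hv.pos _)] using hv.log_isLittleO.const_mul_left s

protected theorem min (hv : IsBackwardTempered v) (hw : IsBackwardTempered w) :
    IsBackwardTempered fun n ↦ min (v n) (w n) where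
  pos n := lt_min (hv.pos n) (hw.pos n)
  log_isLittleO := by
    refine IsLittleO.of_bound fun c hc ↦ ?_
    filter_upwards [hv.log_isLittleO.bound hc, hw.log_isLittleO.bound hc] with n hvn hwn
    rcases min_choice (v n) (w n) with h | h <;> simpa only [h]

theorem comp_add_right (hv : IsBackwardTempered v) (k : ℤ) :
    IsBackwardTempered fun n ↦ v (n + k) where
  pos n := hv.pos (n + k)
  log_isLittleO := by
    have hshift : (fun n : ℤ ↦ ((n + k : ℤ) : ℝ)) =O[atBot] fun n : ℤ ↦ (n : ℝ) := by
      simpa only [Int.cast_add] using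
        (isBigO_refl _ _).add (isLittleO_const_intCast_atBot (k : ℝ)).isBigO
    exact (hv.log_isLittleO.comp_tendsto
      (tendsto_atBot_add_const_right _ k tendsto_id)).trans_isBigO hshift

theorem tendsto_exp_neg_mul_mul_atTop (hv : IsBackwardTempered v) {ε : ℝ} (hε : 0 < ε) :
    Tendsto (fun n : ℤ ↦ exp (-(ε * n)) * v n) atBot atTop := by
  have hlin : Tendsto (fun n : ℤ ↦ -(ε * n)) atBot atTop :=
    tendsto_neg_atBot_atTop.comp <|
      (tendsto_intCast_atBot_iff.2 tendsto_id).const_mul_atBot hε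
  have hlog : (fun n ↦ log (v n)) =o[atBot] fun n : ℤ ↦ -(ε * n) :=
    hv.log_isLittleO.trans_isBigO (isBigO_self_const_mul hε.ne' _ _).neg_right
  have hexp := tendsto_exp_atTop.comp
    ((IsEquivalent.refl.add_isLittleO hlog).symm.tendsto_atTop hlin)
  refine hexp.congr fun n ↦ ?_
  simp only [Function.comp_apply, Pi.add_apply, exp_add, exp_log (hv.pos n)]

end IsBackwardTempered

section BackwardEnvelope

/-- The *backward `ε`-envelope* `n ↦ inf {e^{ε(n - m)} Q m : m ≤ n}` of `Q`: for `Q ≥ 0` this is the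
greatest minorant `q` of `Q` such that `q n ≤ e^ε q (n - 1)`. Up to the factor `δ_ε`, `q_ε` is the
envelope of `Q_ε` along an orbit; the index `m` here is absolute, not relative to `n`. -/
def backwardEnvelope (ε : ℝ) (Q : ℤ → ℝ) (n : ℤ) : ℝ :=
  sInf ((fun m : ℤ ↦ exp (ε * (n - m)) * Q m) '' Iic n)

variable {ε : ℝ} {Q : ℤ → ℝ}

theorem exists_isLeast_image_Iic_of_tendsto_atBot {h : ℤ → ℝ} (hh : Tendsto h atBot atTop) (n : ℤ) :
    ∃ m ≤ n, IsLeast (h '' Iic n) (h m) := by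
  have hlim : Tendsto h (cocompact ℤ ⊓ 𝓟 (Iic n)) atTop := by
    rw [cocompact_eq_atBot_atTop, inf_sup_right, (disjoint_atTop_principal_Iic n).eq_bot,
      sup_bot_eq]
    exact hh.mono_left inf_le_left
  obtain ⟨m, hm, hmin⟩ := continuous_of_discreteTopology.continuousOn.exists_isMinOn'
    (isClosed_discrete (Iic n)) self_mem_Iic (hlim.eventually_ge_atTop (h n))
  exact ⟨m, hm, mem_image_of_mem h hm, forall_mem_image.2 hmin⟩

theorem exists_backwardEnvelope_eq (hQ : Tendsto (fun m : ℤ ↦ exp (-(ε * m)) * Q m) atBot atTop)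
    (n : ℤ) : ∃ m ≤ n, backwardEnvelope ε Q n = exp (ε * (n - m)) * Q m := by
  have hweight : Tendsto (fun m : ℤ ↦ exp (ε * (n - m)) * Q m) atBot atTop := by
    refine (hQ.const_mul_atTop (exp_pos (ε * n))).congr fun m ↦ ?_
    rw [← mul_assoc, ← exp_add, mul_sub, sub_eq_add_neg]
  obtain ⟨m, hmn, hm⟩ := exists_isLeast_image_Iic_of_tendsto_atBot hweight n
  exact ⟨m, hmn, hm.csInf_eq⟩

theorem backwardEnvelope_eq_min (hQ : ∀ m, 0 ≤ Q m) (n : ℤ) :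
    backwardEnvelope ε Q n = min (exp ε * backwardEnvelope ε Q (n - 1)) (Q n) := by
  have hsplit : Iic n = insert n (Iic (n - 1)) := by
    ext m; simp only [mem_Iic, mem_insert_iff]; omega
  have hbdd : BddBelow ((fun m : ℤ ↦ exp (ε * (n - m)) * Q m) '' Iic (n - 1)) :=
    ⟨0, forall_mem_image.2 fun m _ ↦ mul_nonneg (exp_pos _).le (hQ m)⟩
  have hshift : (fun m : ℤ ↦ exp (ε * (n - m)) * Q m) '' Iic (n - 1) =
      (exp ε * ·) '' ((fun m : ℤ ↦ exp (ε * ((n - 1 : ℤ) - m)) * Q m) '' Iic (n - 1)) := by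
    rw [image_image]
    refine image_congr fun m _ ↦ ?_
    rw [← mul_assoc, ← exp_add]
    push_cast
    ring_nf
  have hscale : sInf ((fun m : ℤ ↦ exp (ε * (n - m)) * Q m) '' Iic (n - 1)) =
      exp ε * backwardEnvelope ε Q (n - 1) := by
    rw [hshift]
    exact Real.sInf_smul_of_nonneg (exp_pos ε).le _
  rw [backwardEnvelope, hsplit, image_insert_eq, csInf_insert hbdd (nonempty_Iic.image _), hscale,
    min_comm, sub_self, mul_zero, exp_zero, one_mul]

end BackwardEnvelope

theorem fhatI_fhatI (m n : ℤ) (x : ℤ → ℝ) : fhatI m (fhatI n x) = fhatI (m + n) x := by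
  funext k
  simp only [fhatI, add_assoc]

theorem fhatI_zero (x : ℤ → ℝ) : fhatI 0 x = x := by
  funext k
  simp only [fhatI, add_zero]

section PesinParameter

variable {f : ℝ → ℝ} {χ : ℝ} {x : ℤ → ℝ}

/-- The `n`-th term `e^{2nχ} |d̂f^{(-n)}_{x̂}|²` of the series defining `u(x̂)²`. -/
def uSummand (f : ℝ → ℝ) (χ : ℝ) (x : ℤ → ℝ) (n : ℕ) : ℝ :=
  exp (2 * n * χ) * dfhat f x (-(n : ℤ)) ^ 2

theorem dfhat_neg_natCast (f : ℝ → ℝ) (x : ℤ → ℝ) (n : ℕ) :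
    dfhat f x (-(n : ℤ)) = (∏ j ∈ Finset.range n, deriv f (x (-(j : ℤ) - 1)))⁻¹ := by
  rcases n.eq_zero_or_pos with rfl | hn
  · simp [dfhat]
  · rw [dfhat, if_neg (by omega), neg_neg, Int.toNat_natCast]

theorem dfhat_neg_succ (f : ℝ → ℝ) (x : ℤ → ℝ) (n : ℕ) :
    dfhat f x (-((n + 1 : ℕ) : ℤ)) =
      (deriv f (x (-1)))⁻¹ * dfhat f (fhatI (-1) x) (-(n : ℤ)) := by
  have hshift (j : ℕ) : -((j + 1 : ℕ) : ℤ) - 1 = -(j : ℤ) - 1 + -1 := by push_cast; ring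
  simp only [dfhat_neg_natCast, Finset.prod_range_succ', hshift, fhatI, mul_inv, mul_comm,
    Nat.cast_zero, neg_zero, zero_sub]

theorem uSummand_succ (f : ℝ → ℝ) (χ : ℝ) (x : ℤ → ℝ) (n : ℕ) :
    uSummand f χ x (n + 1) =
      exp (2 * χ) * (deriv f (x (-1)))⁻¹ ^ 2 * uSummand f χ (fhatI (-1) x) n := by
  have hexp : exp (2 * (n + 1 : ℕ) * χ) = exp (2 * χ) * exp (2 * n * χ) := by
    rw [← exp_add]; push_cast; ring_nf
  rw [uSummand, uSummand, dfhat_neg_succ, hexp]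
  ring

theorem summable_uSummand_fhatI_neg_one_iff (hx : deriv f (x (-1)) ≠ 0) :
    Summable (uSummand f χ (fhatI (-1) x)) ↔ Summable (uSummand f χ x) := by
  rw [← summable_nat_add_iff (f := uSummand f χ x) 1]
  simp only [uSummand_succ]
  exact (summable_mul_left_iff (by positivity)).symm

theorem summable_uSummand_fhatI (hx : ∀ n, deriv f (x n) ≠ 0) (hsum : Summable (uSummand f χ x))
    (k : ℤ) : Summable (uSummand f χ (fhatI k x)) := by
  have hstep (k : ℤ) : Summable (uSummand f χ (fhatI (k - 1) x)) ↔
      Summable (uSummand f χ (fhatI k x)) := by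
    rw [sub_eq_neg_add, ← fhatI_fhatI]
    exact summable_uSummand_fhatI_neg_one_iff (hx _)
  induction k using Int.induction_on with
  | zero => rwa [fhatI_zero]
  | succ k ih => exact (hstep _).1 (by rwa [add_sub_cancel_right])
  | pred k ih => exact (hstep _).2 ih

theorem uPes_pos_of_summable (hsum : Summable (uSummand f χ x)) : 0 < uPes f χ x :=
  sqrt_pos.2 <| hsum.tsum_pos (fun n ↦ by unfold uSummand; positivity) 0 (by simp [uSummand, dfhat])

theorem summable_uSummand_of_tendsto (hx : ∀ n, deriv f (x n) ≠ 0) {l : ℝ} (hl : χ < l)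
    (hlim : Tendsto (fun n : ℕ ↦ log |dfhat f x (-(n : ℤ))| / (-(n : ℝ))) atTop (𝓝 l)) :
    Summable (uSummand f χ x) := by
  obtain ⟨l', hχl', hl'l⟩ := exists_between hl
  have hgeom : Summable fun n : ℕ ↦ exp (2 * (χ - l')) ^ n :=
    summable_geometric_of_lt_one (exp_pos _).le (exp_lt_one_iff.2 (by linarith))
  refine .of_norm_bounded_eventually_nat hgeom ?_
  filter_upwards [hlim.eventually_const_lt hl'l, eventually_gt_atTop 0] with n hn hn0
  have hlog : log |dfhat f x (-(n : ℤ))| ≤ -(n * l') := by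
    rw [div_neg, lt_neg, div_lt_iff₀ (by exact_mod_cast hn0)] at hn
    linarith
  have hdf : 0 < |dfhat f x (-(n : ℤ))| := by
    rw [dfhat_neg_natCast]
    exact abs_pos.2 (inv_ne_zero (Finset.prod_ne_zero_iff.2 fun j _ ↦ hx _))
  calc ‖uSummand f χ x n‖ = exp (2 * n * χ) * |dfhat f x (-(n : ℤ))| ^ 2 := by
        rw [sq_abs, uSummand, norm_of_nonneg (by positivity)]
    _ ≤ exp (2 * n * χ) * exp (-(n * l')) ^ 2 := by
        gcongr
        exact (log_le_iff_le_exp hdf).1 hlog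
    _ = exp (2 * (χ - l')) ^ n := by
        rw [← exp_nat_mul, ← exp_nat_mul, ← exp_add]
        push_cast
        ring_nf

end PesinParameter

section Regularity

variable {F : GoodMap} {χ : ℝ} {x : ℤ → ℝ}

theorem GoodMap.deriv_ne_zero {y : ℝ} (hy : y ∈ Mset) (hyS : y ∉ F.S) : deriv F.f y ≠ 0 :=
  fun h ↦ hyS <| (em (y ∈ F.D)).elim .inr fun hD ↦ .inl ⟨⟨hy, hD⟩, h⟩

theorem GoodMap.SatA.dS_pos (hA : F.SatA) {y : ℝ} (hy : y ∈ Mset) (hyS : y ∉ F.S)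
    (hfyS : F.f y ∉ F.S) : 0 < F.dS y := by
  have hnonneg (z : ℝ) : 0 ≤ F.dS z := infDist_nonneg
  obtain ⟨⟨hr, -⟩, -, ⟨hdf, -⟩, -⟩ := hA y hy hyS hfyS
  have hrpos : 0 < F.r y :=
    (le_min (rpow_nonneg (hnonneg _) _) (rpow_nonneg (hnonneg _) _)).trans_lt hr
  refine (hnonneg y).lt_of_ne' fun h0 ↦ GoodMap.deriv_ne_zero hy hyS ?_
  -- If `d(y, S) = 0`, the upper bound in (A2) degenerates to `|df_y| ≤ 0 ^ (-a) = 0`.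
  have hbound := (hdf y (mem_ball_self (by linarith))).2
  rwa [h0, zero_rpow (neg_ne_zero.2 (one_pos.trans F.ha).ne'), abs_nonpos_iff] at hbound

theorem deriv_ne_zero_of_mem_NUE (hx : x ∈ NUE F χ) (n : ℤ) : deriv F.f (x n) ≠ 0 :=
  GoodMap.deriv_ne_zero (hx.1.1 n) (hx.2.1 n)

theorem uPes_fhatI_pos_of_mem_NUE (hx : x ∈ NUE F χ) (n : ℤ) : 0 < uPes F.f χ (fhatI n x) := by
  have hdf := deriv_ne_zero_of_mem_NUE hx
  obtain ⟨-, -, -, l, hl, hlim⟩ := hx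
  exact uPes_pos_of_summable <|
    summable_uSummand_fhatI hdf (summable_uSummand_of_tendsto hdf hl hlim) n

theorem isBackwardTempered_uPes (hx : x ∈ NUEstar F χ) :
    IsBackwardTempered fun n ↦ uPes F.f χ (fhatI n x) :=
  .of_tendsto (uPes_fhatI_pos_of_mem_NUE hx.1) hx.2.2.2

theorem isBackwardTempered_dS (hA : F.SatA) (hx : x ∈ Reg F) :
    IsBackwardTempered fun n ↦ F.dS (x n) := by
  obtain ⟨⟨hM, hf⟩, hS, -, hlim⟩ := hx
  refine .of_tendsto (fun n ↦ hA.dS_pos (hM n) (hS n) ?_) ?_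
  · simpa only [← hf (n + 1), add_sub_cancel_right] using hS (n + 1)
  · simpa only [div_neg, neg_zero] using hlim.neg

end Regularity

section QParameters

variable {F : GoodMap} {χ ε : ℝ} {x : ℤ → ℝ}

theorem isBackwardTempered_rho (hd : IsBackwardTempered fun n ↦ F.dS (x n)) :
    IsBackwardTempered fun n ↦ rho F (fhatI n x) := by
  simpa only [rho, fhatI, add_comm] using
    (hd.comp_add_right (-1)).min ((hd.comp_add_right 0).min (hd.comp_add_right 1))

theorem isBackwardTempered_Qtilde (hε : 0 < ε) (hd : IsBackwardTempered fun n ↦ F.dS (x n))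
    (hu : IsBackwardTempered fun n ↦ uPes F.f χ (fhatI n x)) :
    IsBackwardTempered fun n ↦ Qtilde F χ ε (fhatI n x) := by
  have hu' := hu.comp_add_right (-1)
  simpa only [Qtilde, fhatI_fhatI, add_comm] using
    (IsBackwardTempered.const (rpow_pos_of_pos hε _)).mul <|
      (hu.rpow _).min ((hu'.rpow _).mul ((isBackwardTempered_rho hd).rpow _))

theorem exists_mem_Ieps_between (hε : 0 < ε) {t : ℝ} (ht : 0 < t) (ht1 : t ≤ 1) :
    ∃ q ∈ Ieps ε, exp (-(ε / 3)) * t ≤ q ∧ q ≤ t := by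
  obtain ⟨n, hlt, hle⟩ := exists_nat_pow_near_of_lt_one ht ht1 (exp_pos (-(ε / 3)))
    (exp_lt_one_iff.2 (by linarith))
  refine ⟨exp (-(ε / 3)) ^ (n + 1), ⟨n + 1, ?_⟩, ?_, hlt.le⟩
  · rw [← exp_nat_mul]; ring_nf
  · rw [pow_succ']; gcongr

theorem Qeps_nonneg (F : GoodMap) (χ ε : ℝ) (x : ℤ → ℝ) : 0 ≤ Qeps F χ ε x := by
  refine Real.sSup_nonneg ?_
  rintro _ ⟨⟨n, rfl⟩, -⟩
  positivity

theorem exp_mul_min_one_Qtilde_le_Qeps (hε : 0 < ε) (hQ : 0 < Qtilde F χ ε x) :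
    exp (-(ε / 3)) * min 1 (Qtilde F χ ε x) ≤ Qeps F χ ε x := by
  obtain ⟨q, hqI, hle, hqt⟩ := exists_mem_Ieps_between hε (lt_min one_pos hQ) (min_le_left _ _)
  refine hle.trans (le_csSup ⟨1, ?_⟩ ⟨hqI, hqt.trans (min_le_right _ _)⟩)
  rintro _ ⟨⟨n, rfl⟩, -⟩
  exact exp_le_one_iff.2 (by rw [neg_div, neg_nonpos]; positivity)

theorem exists_isBackwardTempered_le_Qeps (hε : 0 < ε)
    (hd : IsBackwardTempered fun n ↦ F.dS (x n))
    (hu : IsBackwardTempered fun n ↦ uPes F.f χ (fhatI n x)) :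
    ∃ v, IsBackwardTempered v ∧ ∀ n, v n ≤ Qeps F χ ε (fhatI n x) := by
  have hQ := isBackwardTempered_Qtilde hε hd hu
  exact ⟨_, (IsBackwardTempered.const (exp_pos _)).mul ((IsBackwardTempered.const one_pos).min hQ),
    fun n ↦ exp_mul_min_one_Qtilde_le_Qeps hε (hQ.pos n)⟩

theorem deltaEps_pos (ε : ℝ) : 0 < deltaEps ε :=
  exp_pos _

theorem deltaEps_lt (hε : 0 < ε) : deltaEps ε < ε := by
  have hfloor := Int.lt_floor_add_one (log (1 / ε) / ε)
  rw [div_lt_iff₀ hε, one_div, log_inv] at hfloor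
  rw [deltaEps, ← lt_log_iff_exp_lt hε, one_div, log_inv]
  push_cast
  linarith

theorem exp_mul_Qeps_fhatI_fhatI {m : ℤ} (hm : m ≤ 0) (n : ℤ) :
    exp (ε * |(m : ℝ)|) * Qeps F χ ε (fhatI m (fhatI n x)) =
      exp (ε * (n - (m + n : ℤ))) * Qeps F χ ε (fhatI (m + n) x) := by
  rw [fhatI_fhatI, abs_of_nonpos (by exact_mod_cast hm), Int.cast_add, sub_add_cancel_right]

theorem sInf_Qeps_eq_backwardEnvelope (F : GoodMap) (χ ε : ℝ) (x : ℤ → ℝ) (n : ℤ) :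
    sInf {t : ℝ | ∃ m : ℤ, m ≤ 0 ∧
        t = exp (ε * |(m : ℝ)|) * Qeps F χ ε (fhatI m (fhatI n x))} =
      backwardEnvelope ε (fun j ↦ Qeps F χ ε (fhatI j x)) n := by
  congr 1
  ext t
  constructor
  · rintro ⟨m, hm, rfl⟩
    exact ⟨m + n, by simpa using hm, (exp_mul_Qeps_fhatI_fhatI hm n).symm⟩
  · rintro ⟨j, hj, rfl⟩
    have hjn : j - n ≤ 0 := sub_nonpos.2 hj
    exact ⟨j - n, hjn, by rw [exp_mul_Qeps_fhatI_fhatI hjn, sub_add_cancel]⟩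

theorem qeps_fhatI (F : GoodMap) (χ ε : ℝ) (x : ℤ → ℝ) (n : ℤ) :
    qeps F χ ε (fhatI n x) =
      deltaEps ε * backwardEnvelope ε (fun j ↦ Qeps F χ ε (fhatI j x)) n := by
  rw [qeps, sInf_Qeps_eq_backwardEnvelope]

theorem qeps_fhatI_eq_min (F : GoodMap) (χ ε : ℝ) (x : ℤ → ℝ) (n : ℤ) :
    qeps F χ ε (fhatI n x) =
      min (exp ε * qeps F χ ε (fhatI (n - 1) x)) (deltaEps ε * Qeps F χ ε (fhatI n x)) := by
  rw [qeps_fhatI, qeps_fhatI, backwardEnvelope_eq_min fun _ ↦ Qeps_nonneg F χ ε _,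
    mul_min_of_nonneg _ _ (deltaEps_pos ε).le, mul_left_comm]

theorem qeps_lemma_general (hε : 0 < ε) (hd : IsBackwardTempered fun n ↦ F.dS (x n))
    (hu : IsBackwardTempered fun n ↦ uPes F.f χ (fhatI n x)) :
    (∀ n : ℤ,
      (∃ m : ℤ, m ≤ 0 ∧
        sInf {t : ℝ | ∃ m' : ℤ, m' ≤ 0 ∧
            t = exp (ε * |(m' : ℝ)|) * Qeps F χ ε (fhatI m' (fhatI n x))} =
          exp (ε * |(m : ℝ)|) * Qeps F χ ε (fhatI m (fhatI n x))) ∧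
      0 < qeps F χ ε (fhatI n x) ∧
      qeps F χ ε (fhatI n x) < ε * Qeps F χ ε (fhatI n x)) ∧
    (∀ n : ℤ, qeps F χ ε (fhatI n x) =
      min (exp ε * qeps F χ ε (fhatI (n - 1) x)) (deltaEps ε * Qeps F χ ε (fhatI n x))) := by
  obtain ⟨v, hv, hvQ⟩ := exists_isBackwardTempered_le_Qeps hε hd hu
  have hQpos (n : ℤ) : 0 < Qeps F χ ε (fhatI n x) := (hv.pos n).trans_le (hvQ n)
  have hgrowth : Tendsto (fun m : ℤ ↦ exp (-(ε * m)) * Qeps F χ ε (fhatI m x)) atBot atTop :=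
    tendsto_atTop_mono (fun m ↦ by gcongr; exact hvQ m) (hv.tendsto_exp_neg_mul_mul_atTop hε)
  refine ⟨fun n ↦ ?_, qeps_fhatI_eq_min F χ ε x⟩
  obtain ⟨m, hmn, hm⟩ := exists_backwardEnvelope_eq hgrowth n
  refine ⟨⟨m - n, sub_nonpos.2 hmn, ?_⟩, ?_, ?_⟩
  · rw [sInf_Qeps_eq_backwardEnvelope, hm, exp_mul_Qeps_fhatI_fhatI (sub_nonpos.2 hmn),
      sub_add_cancel]
  · rw [qeps_fhatI, hm]
    exact mul_pos (deltaEps_pos ε) (mul_pos (exp_pos _) (hQpos m))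
  · calc qeps F χ ε (fhatI n x) ≤ deltaEps ε * Qeps F χ ε (fhatI n x) :=
          (qeps_fhatI_eq_min F χ ε x n).trans_le (min_le_right _ _)
      _ < ε * Qeps F χ ε (fhatI n x) := mul_lt_mul_of_pos_right (deltaEps_lt hε) (hQpos n)

end QParameters

/-- properties of the parameter `q_ε` (Lemma 2.9). -/
theorem qeps_lemma (F : GoodMap) (hA : F.SatA) (χ : ℝ) (hχ : 0 < χ) :
    ∃ ε₀ > 0, ∀ ε : ℝ, 0 < ε → ε < ε₀ →
      ∀ x ∈ NUEstar F χ,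
        (∀ n : ℤ,
          (∃ m : ℤ, m ≤ 0 ∧
            sInf {t : ℝ | ∃ m' : ℤ, m' ≤ 0 ∧
                t = Real.exp (ε * |(m':ℝ)|) * Qeps F χ ε (fhatI m' (fhatI n x))} =
              Real.exp (ε * |(m:ℝ)|) * Qeps F χ ε (fhatI m (fhatI n x))) ∧
          0 < qeps F χ ε (fhatI n x) ∧
          qeps F χ ε (fhatI n x) < ε * Qeps F χ ε (fhatI n x)) ∧
        (∀ n : ℤ, qeps F χ ε (fhatI n x) =
          min (Real.exp ε * qeps F χ ε (fhatI (n - 1) x))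
            (deltaEps ε * Qeps F χ ε (fhatI n x))) :=
  ⟨1, one_pos, fun _ hε _ _ hx ↦
    qeps_lemma_general hε (isBackwardTempered_dS hA hx.2.1) (isBackwardTempered_uPes hx)⟩

end OneDim
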